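/- Let w be a nonempty word over a totally ordered alphabet Σ that is not an inverse Lyndon word, and let ICFL(w) = (m1, …, mk). Let i, j be integers with 1 < i < j ≤ k, let x be a nonempty suffix of m_{i−1} and y a nonempty suffix of m_{j−1}, and suppose x is a proper prefix of y. Then lcp(x_w, y_w) is a prefix of y m_j. -/

import Mathlib

/-!
Write `x ≪ y` when `x` and `y` first differ at a position where `x` has the smaller letter, so
that neither is a prefix of the other (`StrictLex` below). The proof rests on one property of the
factors of `ICFL(w)`: if `l < j`, then every nonempty suffix `s` of `m_l` satisfies `s ≪ m_j`
(`IsICFL.spec`). As `≪` is transitive and each factor is a suffix of itself, it is enough to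
compare neighbouring factors along the recursive definition of `ICFL`.

* When `p` is a new factor, the point is that a nonempty suffix of `p` is never a prefix of the
  bounded right extension (`suffix_strictLex_bre`). If `s` were one, with `p = r a ⋯`, `p̄ = r b ⋯`
  and `r = s r'`, then `p r` being inverse Lyndon makes its suffix `s s r'` smaller than
  `s r' a ⋯`, whence `s r' ≪ r' b ⋯`; but `p̄ = s r' b ⋯` being inverse Lyndon gives the opposite
  inequality.
* When `p` is merged with `m'₁`, a suffix of `p m'₁` longer than `m'₁` is either `≪ p m'₁` or a
  prefix of `p m'₁`, and then begins with `m'₁`; both are `≪ m'₂` because `m'₁ ≪ m'₂`.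

Now let `y = x z`, so that `z` is a suffix of `m_{j-1}` shorter than `m_{j-1}`. If the common
prefix were not a prefix of `y m_j`, then `z m_j` would be a prefix of `m_i m_{i+1} ⋯`. This
occurrence of `m_j` starts inside some `m_l` with `i ≤ l < j`, so a nonempty suffix of `m_l` and
`m_j` would be prefixes of the same word, which `≪` forbids (`not_prefix_flatten`).
-/

open List

section Defs

variable {α : Type*} [LinearOrder α]

/-- The lexicographic order `x ≺ y` on words over the ordered alphabet `α`. -/
def lexLt (x y : List α) : Prop := List.Lex (· < ·) x y

/-- The inverse `<_in` of the letter order. -/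
def invLt (a b : α) : Prop := b < a

/-- `x ≪ y` : `x ≺ y` and `x` is not a (proper) prefix of `y`. -/
def lexLtLt (x y : List α) : Prop := lexLt x y ∧ ¬ x <+: y

/-- `w` is a Lyndon word with respect to the letter order `r`:
nonempty, primitive, and `≺ᵣ`-smaller than each of its proper nonempty suffixes. -/
def IsLyndonWith (r : α → α → Prop) (w : List α) : Prop :=
  w ≠ [] ∧ (∀ (u : List α) (n : ℕ), w = (List.replicate n u).flatten → n = 1) ∧
  ∀ s : List α, s ≠ [] → s ≠ w → s <:+ w → List.Lex r w s

/-- `L` is the Lyndon factorization of `w` with respect to the letter order `r`: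
a nonempty sequence of Lyndon words, nonincreasing for `≺ᵣ`, whose product is `w`. -/
def IsCFLWith (r : α → α → Prop) (w : List α) (L : List (List α)) : Prop :=
  L ≠ [] ∧ L.flatten = w ∧ (∀ l ∈ L, IsLyndonWith r l) ∧
  List.Chain' (fun x y => ¬ List.Lex r x y) L

/-- an anti-prenecklace: a prefix of a power of an anti-Lyndon word. -/
def IsAntiPrenecklace (z : List α) : Prop :=
  ∃ (l : List α) (k : ℕ), IsLyndonWith invLt l ∧ z <+: (List.replicate k l).flatten

/-- an inverse Lyndon word: each proper nonempty suffix is `≺`-smaller than `w`. -/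
def IsInvLyndon (w : List α) : Prop :=
  w ≠ [] ∧ ∀ s : List α, s ≠ [] → s ≠ w → s <:+ w → lexLt s w

/-- `z` is a border of `w`: a proper prefix and a suffix of `w`. -/
def IsBorder (z w : List α) : Prop := z <+: w ∧ z ≠ w ∧ z <:+ w

/-- `(p, pbar) ∈ Pref_bre(w)`: `p` is an inverse Lyndon word which is a nonempty proper
prefix of `w = p v` and `pbar` is its bounded right extension. -/
def IsBRE (p pbar w : List α) : Prop :=
  IsInvLyndon p ∧ p ≠ [] ∧ p ≠ w ∧
  (∃ v : List α, w = p ++ v ∧ pbar <+: v) ∧ pbar ≠ [] ∧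
  IsInvLyndon pbar ∧
  (∀ z' : List α, z' ≠ [] → z' ≠ pbar → z' <+: pbar → IsInvLyndon (p ++ z')) ∧
  ¬ IsInvLyndon (p ++ pbar) ∧
  lexLt p pbar ∧ ¬ p <+: pbar

/-- The canonical inverse Lyndon factorization `ICFL(w) = M`. -/
inductive IsICFL : List α → List (List α) → Prop
  | base (w : List α) : IsInvLyndon w → IsICFL w [w]
  | ext (w p pbar v m1 : List α) (ms : List (List α)) :
      ¬ IsInvLyndon w → IsBRE p pbar w → w = p ++ v →
      IsICFL v (m1 :: ms) → pbar <+: m1 → IsICFL w (p :: m1 :: ms)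
  | grp (w p pbar v r : List α) (a b : α) (s m1 : List α) (ms : List (List α)) :
      ¬ IsInvLyndon w → IsBRE p pbar w → w = p ++ v →
      p = r ++ a :: s → pbar = r ++ [b] → a < b →
      IsICFL v (m1 :: ms) → m1 <+: r → IsICFL w ((p ++ m1) :: ms)

/-- the longest common prefix of two words. -/
def lcp : List α → List α → List α
  | a :: x, b :: y => if a = b then a :: lcp x y else []
  | _, _ => []

end Defs

section Aux

variable {α : Type*} [LinearOrder α]

/-- The relation `x ≪ y`, by recursion on the words: after a common prefix, `x` continues with a
smaller letter than `y` does. -/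
def StrictLex : List α → List α → Prop
  | a :: x, b :: y => a < b ∨ a = b ∧ StrictLex x y
  | _, _ => False

theorem StrictLex.trans : ∀ {x y z : List α}, StrictLex x y → StrictLex y z → StrictLex x z
  | a :: x, b :: y, c :: z, h1, h2 => by
    simp only [StrictLex] at h1 h2 ⊢
    rcases h1 with h1 | ⟨rfl, h1⟩ <;> rcases h2 with h2 | ⟨rfl, h2⟩
    · exact Or.inl (h1.trans h2)
    · exact Or.inl h1
    · exact Or.inl h2
    · exact Or.inr ⟨rfl, h1.trans h2⟩
  | [], _, _, h1, _ => by simp [StrictLex] at h1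
  | _ :: _, [], _, h1, _ => by simp [StrictLex] at h1
  | _ :: _, _ :: _, [], _, h2 => by simp [StrictLex] at h2

theorem StrictLex.append : ∀ {x y : List α} (u v : List α), StrictLex x y →
    StrictLex (x ++ u) (y ++ v)
  | a :: x, b :: y, u, v, h => by
    simp only [StrictLex, List.cons_append] at h ⊢
    exact h.imp_right fun h => ⟨h.1, h.2.append u v⟩
  | [], _, _, _, h => by simp [StrictLex] at h
  | _ :: _, [], _, _, h => by simp [StrictLex] at h

theorem StrictLex.irrefl : ∀ (x : List α), ¬ StrictLex x x
  | [], h => by simp [StrictLex] at h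
  | a :: x, h => by
    simp only [StrictLex, lt_irrefl, true_and, false_or] at h
    exact StrictLex.irrefl x h

theorem StrictLex.of_prefix {x y x' y' : List α} (h : StrictLex x y) (hx : x <+: x')
    (hy : y <+: y') : StrictLex x' y' := by
  obtain ⟨u, rfl⟩ := hx
  obtain ⟨v, rfl⟩ := hy
  exact h.append u v

theorem lexLt_cons {a b : α} {x y : List α} :
    lexLt (a :: x) (b :: y) ↔ a < b ∨ a = b ∧ lexLt x y := by
  unfold lexLt
  constructor
  · rintro (h | h | h)
    · exact Or.inl (by assumption)
    · exact Or.inr ⟨rfl, by assumption⟩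
  · rintro (h | ⟨rfl, h⟩)
    · exact List.Lex.rel h
    · exact List.Lex.cons h

theorem not_lexLt_nil (x : List α) : ¬ lexLt x [] := by
  intro h; cases h

/-- `x ≺ y` holds only if `x` is a prefix of `y` or `x ≪ y`. -/
theorem lexLt.prefix_or : ∀ {x y : List α}, lexLt x y → x <+: y ∨ StrictLex x y
  | [], _, _ => Or.inl (List.nil_prefix)
  | _ :: _, [], h => absurd h (not_lexLt_nil _)
  | a :: x, b :: y, h => by
    rcases lexLt_cons.1 h with hlt | ⟨rfl, htl⟩
    · exact Or.inr (Or.inl hlt)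
    · rcases htl.prefix_or with hpre | hss
      · exact Or.inl (by simpa using hpre)
      · exact Or.inr (Or.inr ⟨rfl, hss⟩)

theorem StrictLex.not_lexLt : ∀ {x y : List α}, StrictLex x y → ¬ lexLt y x
  | [], _, h => by simp [StrictLex] at h
  | _ :: _, [], h => by simp [StrictLex] at h
  | a :: x, b :: y, h => by
    intro h'
    rcases h with h | ⟨rfl, h⟩ <;> rcases lexLt_cons.1 h' with h' | ⟨h1, h'⟩
    · exact lt_asymm h h'
    · exact absurd h1 h.ne'
    · exact lt_irrefl _ h'
    · exact h.not_lexLt h'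

theorem StrictLex.exists_split : ∀ {x y : List α}, StrictLex x y →
    ∃ r a s b t, a < b ∧ x = r ++ a :: s ∧ y = r ++ b :: t
  | [], _, h => by simp [StrictLex] at h
  | _ :: _, [], h => by simp [StrictLex] at h
  | a :: x, b :: y, h => by
    rcases h with h | ⟨rfl, h⟩
    · exact ⟨[], a, x, b, y, h, rfl, rfl⟩
    · obtain ⟨r, c, s, d, t, hcd, rfl, rfl⟩ := h.exists_split
      exact ⟨a :: r, c, s, d, t, hcd, rfl, rfl⟩

theorem strictLex_split {a b : α} (hab : a < b) (r s t : List α) :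
    StrictLex (r ++ a :: s) (r ++ b :: t) := by
  induction r with
  | nil => exact Or.inl hab
  | cons c r ih => exact Or.inr ⟨rfl, ih⟩

theorem lexLt_append_left (s x y : List α) : lexLt (s ++ x) (s ++ y) ↔ lexLt x y := by
  induction s with
  | nil => rfl
  | cons c s ih => simp [lexLt_cons, ih]

theorem prefix_of_prefix_split {a b : α} (hab : a ≠ b) :
    ∀ {r s u t : List α}, u <+: r ++ a :: s → u <+: r ++ b :: t → u <+: r
  | _, _, [], _, _, _ => List.nil_prefix
  | [], _, c :: u, _, h1, h2 => by
    simp only [List.nil_append, List.cons_prefix_cons] at h1 h2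
    exact absurd (h1.1.symm.trans h2.1) hab
  | d :: r, _, c :: u, _, h1, h2 => by
    simp only [List.cons_append, List.cons_prefix_cons] at h1 h2 ⊢
    exact ⟨h1.1, prefix_of_prefix_split hab h1.2 h2.2⟩

/-- A word longer than `r` and below a word that starts with `r a` is `≪` every word that starts
with `r b`, for `a < b`. -/
theorem lexLt.strictLex_raise {a b : α} (hab : a < b) (q t : List α) :
    ∀ {r x : List α}, lexLt x (r ++ a :: q) → r.length < x.length → StrictLex x (r ++ b :: t)
  | _, [], _, h => by simp at h
  | [], c :: x, h, _ => by
    rcases lexLt_cons.1 h with h | ⟨rfl, h⟩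
    · exact Or.inl (h.trans hab)
    · exact Or.inl hab
  | d :: r, c :: x, h, hl => by
    rcases lexLt_cons.1 h with hlt | ⟨rfl, htl⟩
    · exact Or.inl hlt
    · exact Or.inr ⟨rfl, htl.strictLex_raise hab q t (by simpa using hl)⟩

/-- Every nonempty suffix of `p` is `≪` the bounded right extension of `p`. -/
theorem suffix_strictLex_bre {p pbar w s : List α} (h : IsBRE p pbar w) (hs : s ≠ [])
    (hsp : s <:+ p) : StrictLex s pbar := by
  obtain ⟨hp, -, -, -, -, hbar, hext, -, hlt, hnp⟩ := h
  have hpp : StrictLex p pbar := hlt.prefix_or.resolve_left hnp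
  by_cases hne : s = p
  · exact hne ▸ hpp
  rcases (hp.2 s hs hne hsp).prefix_or with hpre | hss
  swap
  · exact hss.trans hpp
  obtain ⟨r, a, q, b, t, hab, hpr, hbr⟩ := hpp.exists_split
  by_cases hsr : s <+: r
  · exfalso
    obtain ⟨r', rfl⟩ := hsr
    have hspos : 0 < s.length := List.length_pos_iff.2 hs
    have hprr : IsInvLyndon (p ++ (s ++ r')) := by
      refine hext _ (by simp [hs]) ?_ ⟨b :: t, hbr.symm⟩
      intro h
      have := congrArg List.length (h.trans hbr)
      simp at this
    have h1 : lexLt (s ++ (s ++ r')) (p ++ (s ++ r')) := by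
      refine hprr.2 _ (by simp [hs]) ?_ ?_
      · intro h
        exact hne (List.append_cancel_right h)
      · obtain ⟨u, rfl⟩ := hsp
        exact ⟨u, by simp⟩
    have h2 : lexLt (s ++ r') (r' ++ a :: (q ++ (s ++ r'))) := by
      rw [← lexLt_append_left s]
      rw [hpr] at h1
      simpa using h1
    have h3 : StrictLex (s ++ r') (r' ++ b :: t) :=
      h2.strictLex_raise hab _ t (by rw [List.length_append]; omega)
    have h4 : lexLt (r' ++ b :: t) pbar := by
      refine hbar.2 _ (by simp) ?_ ⟨s, by simp [hbr]⟩
      intro h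
      have := congrArg List.length (h.trans hbr)
      simp at this
      exact hs this
    refine (h3.of_prefix (x' := pbar) ?_ (List.prefix_refl _)).not_lexLt h4
    exact ⟨b :: t, hbr.symm⟩
  · -- `s` is a prefix of `p = r a ⋯` reaching beyond `r`
    rw [hpr] at hpre
    rcases List.prefix_or_prefix_of_prefix hpre (List.prefix_append r (a :: q)) with h | h
    · exact absurd h hsr
    · obtain ⟨u, rfl⟩ := h
      cases u with
      | nil => simp at hsr
      | cons c u =>
        have hc : c = a := by
          rw [List.prefix_append_right_inj, List.cons_prefix_cons] at hpre
          exact hpre.1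
        rw [hbr, hc]
        exact strictLex_split hab _ _ _

/-- The factors of `ICFL(w)` are nonempty, and every nonempty suffix of a factor is `≪` every
later factor. -/
theorem IsICFL.spec {w : List α} {M : List (List α)} (h : IsICFL w M) :
    (∀ m ∈ M, m ≠ []) ∧
      M.Pairwise (fun m m' => ∀ s : List α, s ≠ [] → s <:+ m → StrictLex s m') := by
  induction h with
  | base w hw => simpa using hw.1
  | ext w p pbar v m1 ms _ hbre _ _ hpre ih =>
    obtain ⟨hne, hpw⟩ := ih
    have h1 : ∀ s : List α, s ≠ [] → s <:+ p → StrictLex s m1 := fun s hs hsp =>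
      (suffix_strictLex_bre hbre hs hsp).of_prefix (List.prefix_refl _) hpre
    refine ⟨?_, List.pairwise_cons.2 ⟨?_, hpw⟩⟩
    · intro m hm
      rcases List.mem_cons.1 hm with rfl | hm
      · exact hbre.2.1
      · exact hne m hm
    · intro m hm s hs hsp
      rcases List.mem_cons.1 hm with rfl | hm
      · exact h1 s hs hsp
      · exact (h1 s hs hsp).trans ((List.pairwise_cons.1 hpw).1 m hm m1
          (hne m1 List.mem_cons_self) List.suffix_rfl)
  | grp w p pbar v r a b q m1 ms _ hbre _ hpr hbr hab _ hpre ih =>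
    obtain ⟨hne, hpw⟩ := ih
    have hm1 : m1 ≠ [] := hne m1 List.mem_cons_self
    obtain ⟨hhead, htail⟩ := List.pairwise_cons.1 hpw
    have hinv : IsInvLyndon (p ++ m1) := by
      refine hbre.2.2.2.2.2.2.1 m1 hm1 ?_ (hpre.trans ⟨[b], hbr.symm⟩)
      intro h
      have h1 := hpre.length_le
      have h2 := congrArg List.length (h.trans hbr)
      simp at h2
      omega
    have hm1p : m1 <+: p ++ m1 :=
      (hpre.trans ⟨a :: q, hpr.symm⟩).trans (List.prefix_append _ _)
    refine ⟨?_, List.pairwise_cons.2 ⟨?_, htail⟩⟩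
    · intro m hm
      rcases List.mem_cons.1 hm with rfl | hm
      · simp [hm1]
      · exact hne m (List.mem_cons_of_mem _ hm)
    · intro m hm s hs hsp
      have hm1m : StrictLex m1 m := hhead m hm m1 hm1 List.suffix_rfl
      have hpm : StrictLex (p ++ m1) m := hm1m.of_prefix hm1p (List.prefix_refl _)
      rcases List.suffix_or_suffix_of_suffix hsp (List.suffix_append p m1) with h | h
      · exact hhead m hm s hs h
      by_cases hsne : s = p ++ m1
      · exact hsne ▸ hpm
      rcases (hinv.2 s hs hsne hsp).prefix_or with h' | h'
      · exact hm1m.of_prefix (List.prefix_of_prefix_length_le hm1p h' h.length_le)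
          (List.prefix_refl _)
      · exact h'.trans hpm

/-- If every nonempty suffix of every word in `N` is `≪ m`, then `m` does not occur in
`N.flatten ++ u` at a position inside `N.flatten`. -/
theorem not_prefix_flatten {m : List α} (u : List α) :
    ∀ (N : List (List α)) (z : List α),
      (∀ n ∈ N, ∀ s : List α, s ≠ [] → s <:+ n → StrictLex s m) →
      z.length < N.flatten.length → ¬ z ++ m <+: N.flatten ++ u
  | [], z, _, hl, _ => by simp at hl
  | n :: N, z, hN, hl, h => by
    have hz : z <+: n ++ (N.flatten ++ u) := by
      simpa using (List.prefix_append z m).trans h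
    rcases List.prefix_or_prefix_of_prefix hz (List.prefix_append n _) with ⟨s, hs⟩ | ⟨z', rfl⟩
    · subst hs
      by_cases hs : s = []
      · subst hs
        refine not_prefix_flatten u N [] (fun n hn => hN n (List.mem_cons_of_mem _ hn)) ?_ ?_
        · simp at hl ⊢
          omega
        · simpa using h
      · have hlt := hN _ List.mem_cons_self s hs (List.suffix_append z s)
        have hm : m <+: s ++ (N.flatten ++ u) := by simpa using h
        exact StrictLex.irrefl _ (hlt.of_prefix (List.prefix_append s _) hm)
    · refine not_prefix_flatten u N z' (fun n hn => hN n (List.mem_cons_of_mem _ hn)) ?_ ?_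
      · simpa using hl
      · simpa using h

theorem lcp_prefix_left : ∀ x y : List α, lcp x y <+: x
  | [], y => by simp [lcp]
  | a :: x, [] => by simp [lcp]
  | a :: x, b :: y => by
    simp only [lcp]
    split_ifs
    · simpa using lcp_prefix_left x y
    · exact List.nil_prefix

theorem lcp_prefix_right : ∀ x y : List α, lcp x y <+: y
  | [], y => by simp [lcp]
  | a :: x, [] => by simp [lcp]
  | a :: x, b :: y => by
    simp only [lcp]
    split_ifs with h
    · simpa [h] using lcp_prefix_right x y
    · exact List.nil_prefix

end Aux

/-- Lemma `suffix-relationship-basic2casodiff`: with `ICFL(w) = (m₁, …, m_k)` and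
`i < j` (Lean indices are the 0-based positions of `m_i`, `m_j`), if `x` is a nonempty
suffix of `m_{i-1}`, `y` a nonempty suffix of `m_{j-1}`, and `x` is a proper prefix of
`y`, then `lcp(x_w, y_w)` is a prefix of `y m_j`. -/
theorem stmt16 {α : Type*} [LinearOrder α] (w : List α) (hw : w ≠ [])
    (hwn : ¬ IsInvLyndon w)
    (M : List (List α)) (hM : IsICFL w M)
    (i j : ℕ) (hi0 : 0 < i) (hij : i < j) (hjk : j < M.length)
    (x y : List α) (hx : x ≠ []) (hy : y ≠ [])
    (hxs : x <:+ M[i-1]!) (hys : y <:+ M[j-1]!)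
    (hxy : x <+: y) (hxyne : x ≠ y) :
    lcp (x ++ (M.drop i).flatten) (y ++ (M.drop j).flatten) <+: (y ++ M[j]!) := by
  obtain ⟨-, hpw⟩ := hM.spec
  have hMj : M[j]! = M[j] := getElem!_pos M j hjk
  have hMj' : M[j-1]! = M[j-1] := getElem!_pos M (j-1) (by omega)
  rw [hMj]
  rw [hMj'] at hys
  have hdj : M.drop j = M[j] :: M.drop (j+1) := List.drop_eq_getElem_cons hjk
  obtain ⟨z, rfl⟩ := hxy
  have hR : (x ++ z) ++ M[j] <+: (x ++ z) ++ (M.drop j).flatten := by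
    rw [hdj, List.flatten_cons, ← List.append_assoc]
    exact List.prefix_append _ _
  rcases List.prefix_or_prefix_of_prefix (lcp_prefix_right _ _) hR with h | h
  · exact h
  exfalso
  have h1 : z ++ M[j] <+: (M.drop i).flatten := by
    have := h.trans (lcp_prefix_left _ _)
    rwa [List.append_assoc, List.prefix_append_right_inj] at this
  have hsplit : M.drop i = (M.take j).drop i ++ M.drop j := by
    conv_lhs => rw [← List.take_append_drop j M]
    rw [List.drop_append_of_le_length]
    simp
    omega
  rw [hsplit, List.flatten_append] at h1
  refine not_prefix_flatten _ _ _ ?_ ?_ h1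
  · intro n hn
    rw [← List.take_append_drop j M, List.pairwise_append] at hpw
    refine hpw.2.2 n (List.mem_of_mem_drop hn) M[j] ?_
    rw [hdj]
    exact List.mem_cons_self
  · -- `|z| < |x z| ≤ |m_{j-1}|`, and `m_{j-1}` is one of the words `m_i, …, m_{j-1}`
    have hmem : M[j-1] ∈ (M.take j).drop i := by
      rw [List.mem_iff_getElem]
      refine ⟨j - 1 - i, by simp; omega, ?_⟩
      simp only [List.getElem_drop, List.getElem_take]
      congr 1
      omega
    have h2 := (List.sublist_flatten_of_mem hmem).length_le
    have h3 := hys.length_le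
    have h4 : 0 < x.length := List.length_pos_iff.2 hx
    simp only [List.length_append] at h3
    omega
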